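/- Let n ≥ 1 and let s_1 ≤ s_2 ≤ ... ≤ s_n be integers with 0 ≤ s_1. Then lim_{N→∞} M(N) · [∏_{k=1}^{n} (s_k + k - 1)!] / (N^{s_1 + ... + s_n} · ∏_{1 ≤ i < j ≤ n} (s_j + j - s_i - i)) = 1; equivalently, M(N) = [∏_{k=1}^{n} N^{s_k} / (s_k + k - 1)!] · [∏_{1 ≤ i < j ≤ n} (s_j + j - s_i - i)] · (1 + o(1)) as N → ∞. (Note ∏_{1 ≤ i < j ≤ n} (s_j + j - s_i - i) > 0 since the s_k are weakly increasing.) -/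

import Mathlib

open Finset Filter

/-- Shifted highest-weight coordinates `a_k = N - 2 s_k + 2(n-k) + 1`
(0-based index `k : Fin n` corresponds to the 1-based index `k+1`). -/
def aCoord (n : ℕ) (s : Fin n → ℤ) (N : ℕ) (k : Fin n) : ℤ :=
  (N : ℤ) - 2 * s k + 2 * ((n : ℤ) - 1 - (k : ℕ)) + 1

/-- Multiplicity `M(N)` of the irreducible `so(2n+1)`-representation with
rescaled highest-weight coordinates `λ_k = N - 2 s_k` in the `N`-th tensor
power of the spinor representation. -/
noncomputable def Mmult (n : ℕ) (s : Fin n → ℤ) (N : ℕ) : ℝ :=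
  (∏ k : Fin n,
      (Nat.factorial (N + 2 * (k : ℕ)) : ℝ) /
        ((2 : ℝ) ^ (2 * (k : ℕ)) *
          (Nat.factorial (((N : ℤ) + aCoord n s N k + 2 * n - 1) / 2).toNat : ℝ) *
          (Nat.factorial (((N : ℤ) - aCoord n s N k + 2 * n - 1) / 2).toNat : ℝ))) *
    (∏ l : Fin n, (aCoord n s N l : ℝ)) *
    (∏ i : Fin n, ∏ j ∈ Finset.Ioi i,
      ((aCoord n s N i : ℝ) ^ 2 - (aCoord n s N j : ℝ) ^ 2))

lemma lin_ratio (c : ℝ) : Tendsto (fun N : ℕ => ((N : ℝ) + c) / N) atTop (nhds 1) := by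
  have h : Tendsto (fun N : ℕ => 1 + c / (N : ℝ)) atTop (nhds (1 + 0)) :=
    tendsto_const_nhds.add (tendsto_const_div_atTop_nhds_zero_nat c)
  rw [add_zero] at h
  refine h.congr' ?_
  filter_upwards [eventually_gt_atTop 0] with N hN
  have : (N : ℝ) ≠ 0 := by positivity
  field_simp

lemma fact_step (m : ℤ) (hm : 0 ≤ m) :
    (Nat.factorial (m + 1).toNat : ℝ) = ((m : ℝ) + 1) * (Nat.factorial m.toNat : ℝ) := by
  lift m to ℕ using hm
  have : ((m : ℤ) + 1).toNat = m + 1 := by omega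
  rw [this, Nat.factorial_succ]
  simp

lemma fact_ratio (c : ℤ) :
    Tendsto (fun N : ℕ => (Nat.factorial ((N : ℤ) + c).toNat : ℝ) /
      ((Nat.factorial N : ℝ) * (N : ℝ) ^ c)) atTop (nhds 1) := by
  induction c using Int.induction_on with
  | zero =>
    refine tendsto_const_nhds.congr fun N => ?_
    have : (Nat.factorial N : ℝ) ≠ 0 := by positivity
    simp [this]
  | succ i ih =>
    have h := ih.mul (lin_ratio ((i : ℝ) + 1))
    rw [one_mul] at h
    refine h.congr' ?_
    filter_upwards [eventually_gt_atTop 0] with N hN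
    have hN' : (N : ℝ) ≠ 0 := by positivity
    have := fact_step ((N : ℤ) + i) (by omega)
    rw [← add_assoc (N : ℤ) (i : ℤ) 1, this, zpow_add_one₀ hN']
    push_cast
    rw [div_mul_div_comm]
    congr 1 <;> ring
  | pred i ih =>
    have h := ih.div (lin_ratio (-(i : ℝ))) one_ne_zero
    rw [div_one] at h
    refine h.congr' ?_
    filter_upwards [eventually_gt_atTop (i + 1)] with N hN
    have hN' : (N : ℝ) ≠ 0 := by
      have : 0 < N := by omega
      positivity
    have h1 : (N : ℝ) + -(i : ℝ) ≠ 0 := by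
      have : (i : ℝ) + 1 < N := by exact_mod_cast hN
      linarith
    have h2 := fact_step ((N : ℤ) + (-(i : ℤ) - 1)) (by omega)
    have h3 : (N : ℤ) + (-(i : ℤ) - 1) + 1 = (N : ℤ) + -(i : ℤ) := by ring
    rw [h3] at h2
    simp only [Pi.div_apply]
    rw [h2, zpow_sub_one₀ hN']
    push_cast
    have h4 : (N : ℝ) + (-(i : ℝ) - 1) + 1 = (N : ℝ) + -(i : ℝ) := by ring
    rw [h4]
    have h5 : (N : ℝ) ^ (-(i : ℤ)) ≠ 0 := zpow_ne_zero _ hN'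
    have h6 : (Nat.factorial N : ℝ) ≠ 0 := by positivity
    generalize (N : ℝ) ^ (-(i : ℤ)) = P at *
    field_simp

lemma sum_zero (n : ℕ) : ∑ k : Fin n, (4 * ((k : ℕ) : ℤ) - 2 * n + 2) = 0 := by
  have h : (∑ k : Fin n, ((k : ℕ) : ℤ)) * 2 = n * (n - 1) := by
    rw [Fin.sum_univ_eq_sum_range (fun k => (k : ℤ)) n]
    induction n with
    | zero => simp
    | succ m ih => rw [Finset.sum_range_succ, add_mul, ih]; push_cast; ring
  rw [Finset.sum_add_distrib, Finset.sum_sub_distrib, ← Finset.mul_sum]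
  simp
  linarith

lemma prod_pairs (n : ℕ) (c : ℝ) :
    ∏ i : Fin n, ∏ _j ∈ Finset.Ioi i, c = ∏ k : Fin n, c ^ (k : ℕ) := by
  rw [Finset.prod_comm' (t' := Finset.univ) (s' := fun j => Finset.Iio j) (by simp)]
  simp

lemma prod_zpow_sum {ι : Type*} (t : Finset ι) (x : ℝ) (hx : x ≠ 0) (e : ι → ℤ) :
    ∏ k ∈ t, x ^ e k = x ^ (∑ k ∈ t, e k) := by
  classical
  induction t using Finset.induction_on with
  | empty => simp
  | insert a t ha ih => rw [Finset.prod_insert ha, Finset.sum_insert ha, ih, zpow_add₀ hx]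

lemma power_count (n : ℕ) (s : Fin n → ℤ) (x : ℝ) (hx : x ≠ 0) :
    (∏ k : Fin n, (x ^ (2 * ((k : ℕ) : ℤ)) / ((2 : ℝ) ^ (2 * (k : ℕ)) *
        x ^ (2 * (n : ℤ) - 1 - (k : ℕ) - s k)))) * (∏ _l : Fin n, x) *
      (∏ i : Fin n, ∏ _j ∈ Finset.Ioi i, (4 * x)) = x ^ (∑ k, s k) := by
  have h := sum_zero n
  have h2 : ∑ k, s k = ∑ k : Fin n, (s k + (4 * ((k : ℕ) : ℤ) - 2 * n + 2)) := by
    rw [Finset.sum_add_distrib, h, add_zero]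
  rw [prod_pairs, h2, ← prod_zpow_sum _ _ hx, ← Finset.prod_mul_distrib,
    ← Finset.prod_mul_distrib]
  refine Finset.prod_congr rfl fun k _ => ?_
  have h3 : s k + (4 * ((k : ℕ) : ℤ) - 2 * n + 2) =
      2 * ((k : ℕ) : ℤ) - (2 * (n : ℤ) - 1 - (k : ℕ) - s k) + 1 + (k : ℕ) := by ring
  rw [h3, zpow_add₀ hx, zpow_add_one₀ hx, zpow_sub₀ hx (2 * ((k : ℕ) : ℤ)), mul_pow, pow_mul, zpow_natCast]
  have h5 := zpow_ne_zero (2 * (n : ℤ) - 1 - (k : ℕ) - s k) hx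
  generalize x ^ (2 * (n : ℤ) - 1 - (k : ℕ) - s k) = P at *
  norm_num
  field_simp

/-- For `n ≥ 1` and weakly increasing nonnegative integers
`s_1 ≤ … ≤ s_n`, the multiplicity satisfies
`lim_{N→∞} M(N) ∏_k (s_k + k - 1)! / (N^{s_1+⋯+s_n} ∏_{i<j} (s_j + j - s_i - i)) = 1`,
i.e. `M(N) = [∏_k N^{s_k}/(s_k+k-1)!]·[∏_{i<j}(s_j+j-s_i-i)]·(1+o(1))`. -/
theorem multiplicity_asymptotics (n : ℕ) (hn : 1 ≤ n) (s : Fin n → ℤ)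
    (hmono : Monotone s) (h0 : 0 ≤ s ⟨0, hn⟩) :
    Tendsto
      (fun N : ℕ =>
        Mmult n s N * (∏ k : Fin n, (Nat.factorial (s k + (k : ℕ)).toNat : ℝ)) /
          ((N : ℝ) ^ (∑ i : Fin n, (s i : ℝ)) *
            ∏ i : Fin n, ∏ j ∈ Finset.Ioi i,
              ((s j : ℝ) + ((j : ℕ) : ℝ) - (s i : ℝ) - ((i : ℕ) : ℝ))))
      atTop (nhds 1) := by
  have hs : ∀ k, 0 ≤ s k := fun k => h0.trans (hmono (by simp [Fin.le_def]))
  -- factorial factors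
  have hA : ∀ k : Fin n, Tendsto (fun N : ℕ =>
      ((Nat.factorial ((N : ℤ) + 2 * ((k : ℕ) : ℤ)).toNat : ℝ) /
        ((Nat.factorial N : ℝ) * (N : ℝ) ^ (2 * ((k : ℕ) : ℤ)))) /
      ((Nat.factorial ((N : ℤ) + (2 * (n : ℤ) - 1 - (k : ℕ) - s k)).toNat : ℝ) /
        ((Nat.factorial N : ℝ) * (N : ℝ) ^ (2 * (n : ℤ) - 1 - (k : ℕ) - s k)))) atTop (nhds 1) := by
    intro k
    have := (fact_ratio (2 * ((k : ℕ) : ℤ))).div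
      (fact_ratio (2 * (n : ℤ) - 1 - (k : ℕ) - s k)) one_ne_zero
    rwa [div_one] at this
  have hB : ∀ k : Fin n, Tendsto (fun N : ℕ => (aCoord n s N k : ℝ) / N) atTop (nhds 1) := by
    intro k
    refine (lin_ratio (-2 * s k + 2 * ((n : ℝ) - 1 - (k : ℕ)) + 1)).congr fun N => ?_
    unfold aCoord
    push_cast
    congr 1
    ring
  have hD : ∀ i : Fin n, ∀ j ∈ Finset.Ioi i,
      (s j : ℝ) + ((j : ℕ) : ℝ) - (s i : ℝ) - ((i : ℕ) : ℝ) ≠ 0 := by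
    intro i j hj
    have hij : i < j := by simpa using hj
    have h1 : (s i : ℝ) ≤ s j := by exact_mod_cast hmono hij.le
    have h2 : ((i : ℕ) : ℝ) < ((j : ℕ) : ℝ) := by exact_mod_cast hij
    linarith
  have hC : ∀ i : Fin n, ∀ j ∈ Finset.Ioi i, Tendsto (fun N : ℕ =>
      ((aCoord n s N i : ℝ) ^ 2 - (aCoord n s N j : ℝ) ^ 2) / (4 * (N : ℝ) *
        ((s j : ℝ) + ((j : ℕ) : ℝ) - (s i : ℝ) - ((i : ℕ) : ℝ)))) atTop (nhds 1) := by
    intro i j hj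
    have h := ((hB i).add (hB j)).div_const 2
    norm_num at h
    refine h.congr' ?_
    filter_upwards [eventually_gt_atTop 0] with N hN
    have hN' : (N : ℝ) ≠ 0 := by positivity
    have hd := hD i j hj
    have e : (aCoord n s N i : ℝ) ^ 2 - (aCoord n s N j : ℝ) ^ 2 =
        ((aCoord n s N i : ℝ) + aCoord n s N j) *
        (2 * ((s j : ℝ) + ((j : ℕ) : ℝ) - (s i : ℝ) - ((i : ℕ) : ℝ))) := by
      unfold aCoord
      push_cast
      ring
    rw [e]
    generalize (s j : ℝ) + ((j : ℕ) : ℝ) - (s i : ℝ) - ((i : ℕ) : ℝ) = d at *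
    field_simp
    ring
  have hlim := ((tendsto_finsetProd Finset.univ fun k _ => hA k).mul
    (tendsto_finsetProd Finset.univ fun k _ => hB k)).mul
    (tendsto_finsetProd Finset.univ fun i _ =>
      tendsto_finsetProd (Finset.Ioi i) fun j hj => hC i j hj)
  simp only [Finset.prod_const_one, mul_one] at hlim
  refine hlim.congr' ?_
  filter_upwards [eventually_gt_atTop 0] with N hN
  have hN' : (N : ℝ) ≠ 0 := by positivity
  have hpow : (N : ℝ) ^ (∑ i : Fin n, (s i : ℝ)) = (N : ℝ) ^ (∑ i, s i) := by
    rw [← Real.rpow_intCast]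
    push_cast
    rfl
  rw [hpow, ← power_count n s N hN']
  unfold Mmult
  have e1 : ∀ k : Fin n, ((N : ℤ) + aCoord n s N k + 2 * n - 1) / 2 =
      (N : ℤ) + (2 * (n : ℤ) - 1 - (k : ℕ) - s k) := by
    intro k; unfold aCoord; omega
  have e2 : ∀ k : Fin n, ((N : ℤ) - aCoord n s N k + 2 * n - 1) / 2 = s k + (k : ℕ) := by
    intro k; unfold aCoord; omega
  have e3 : ∀ k : Fin n, ((N : ℤ) + 2 * ((k : ℕ) : ℤ)).toNat = N + 2 * (k : ℕ) := by
    intro k; omega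
  simp only [e1, e2, e3]
  have hFk : ∀ k : Fin n,
      (Nat.factorial (N + 2 * (k : ℕ)) : ℝ) / ((2 : ℝ) ^ (2 * (k : ℕ)) *
        (Nat.factorial ((N : ℤ) + (2 * (n : ℤ) - 1 - (k : ℕ) - s k)).toNat : ℝ) *
        (Nat.factorial (s k + (k : ℕ)).toNat : ℝ)) * (Nat.factorial (s k + (k : ℕ)).toNat : ℝ) /
      ((N : ℝ) ^ (2 * ((k : ℕ) : ℤ)) / ((2 : ℝ) ^ (2 * (k : ℕ)) *
        (N : ℝ) ^ (2 * (n : ℤ) - 1 - (k : ℕ) - s k))) =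
      ((Nat.factorial (N + 2 * (k : ℕ)) : ℝ) /
        ((Nat.factorial N : ℝ) * (N : ℝ) ^ (2 * ((k : ℕ) : ℤ)))) /
      ((Nat.factorial ((N : ℤ) + (2 * (n : ℤ) - 1 - (k : ℕ) - s k)).toNat : ℝ) /
        ((Nat.factorial N : ℝ) * (N : ℝ) ^ (2 * (n : ℤ) - 1 - (k : ℕ) - s k))) := by
    intro k
    have f1 : ∀ m : ℕ, (Nat.factorial m : ℝ) ≠ 0 := fun m => by positivity
    have g1 := f1 N
    have g2 := f1 (s k + (k : ℕ)).toNat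
    have g3 := f1 ((N : ℤ) + (2 * (n : ℤ) - 1 - (k : ℕ) - s k)).toNat
    have g4 := zpow_ne_zero (2 * (n : ℤ) - 1 - (k : ℕ) - s k) hN'
    have g5 := zpow_ne_zero (2 * ((k : ℕ) : ℤ)) hN'
    have g6 : (2 : ℝ) ^ (2 * (k : ℕ)) ≠ 0 := by positivity
    generalize (N : ℝ) ^ (2 * (n : ℤ) - 1 - (k : ℕ) - s k) = P at *
    generalize (N : ℝ) ^ (2 * ((k : ℕ) : ℤ)) = Q at *
    generalize (2 : ℝ) ^ (2 * (k : ℕ)) = R at *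
    generalize (Nat.factorial (s k + (k : ℕ)).toNat : ℝ) = X at *
    generalize (Nat.factorial ((N : ℤ) + (2 * (n : ℤ) - 1 - (k : ℕ) - s k)).toNat : ℝ) = Y at *
    field_simp
  rw [← Finset.prod_congr rfl fun k _ => hFk k]
  simp only [Finset.prod_div_distrib, Finset.prod_mul_distrib]
  simp only [div_eq_mul_inv, mul_inv, inv_inv]
  ring
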